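/- arXiv:1909.07762 — 2 statements merged into one kernel-verified Lean document; each statement's English description precedes it below -/
import Mathlib

section
/- For all nonnegative integers m and n, π(m,n) = Σ_{0 ≤ k ≤ min(m,n)} c(min(m,n) − k) · α(|m−n|, k), where α(s,k) = Σ_{ℓ ≥ 0} (−1)^ℓ p(k − ℓ(ℓ+1)/2 − ℓs) and p(r) := 0 for all r < 0. -/
open Finset

/-- A pair of sequences of parts is *steadily decreasing* if
`min (a i) (b i) ≥ max (a (i+1)) (b (i+1))` for all `i`. -/
noncomputable def SteadilyDecreasing (a b : ℕ → ℕ) : Prop :=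
  ∀ i, max (a (i + 1)) (b (i + 1)) ≤ min (a i) (b i)

/-- `bipartitePi m n` is the number of pairs of partitions (given as non-increasing,
finitely supported sequences) of the bipartite number `(m, n)` with steadily
decreasing parts. -/
noncomputable def bipartitePi (m n : ℕ) : ℕ :=
  Nat.card {p : (ℕ →₀ ℕ) × (ℕ →₀ ℕ) //
    (∀ i, p.1 (i + 1) ≤ p.1 i) ∧ (∀ i, p.2 (i + 1) ≤ p.2 i) ∧
    SteadilyDecreasing p.1 p.2 ∧
    (p.1.sum fun _ x => x) = m ∧ (p.2.sum fun _ x => x) = n}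

/-- The partition function `p n`. -/
noncomputable def partitionCount (n : ℕ) : ℕ := Nat.card (Nat.Partition n)

/-- The partition function extended to the integers, with `p r = 0` for `r < 0`. -/
noncomputable def partitionCountInt (r : ℤ) : ℕ := if 0 ≤ r then partitionCount r.toNat else 0

/-- The cubic partition function `c n`, counting partitions of `n` in which even
parts come in two colors (equivalently, pairs of a partition together with a
partition into even parts, of total size `n`). -/
noncomputable def cubicPartition (n : ℕ) : ℕ :=
  Nat.card {p : Multiset ℕ × Multiset ℕ //
    (∀ i ∈ p.1, 0 < i) ∧ (∀ i ∈ p.2, 0 < i ∧ Even i) ∧ p.1.sum + p.2.sum = n}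

/-- The Andrews–Garvan crank of a partition: the largest part if there are no ones,
and otherwise the number of parts larger than the number of ones minus the number of
ones. -/
noncomputable def crank {n : ℕ} (l : n.Partition) : ℤ :=
  if l.parts.count 1 = 0 then (l.parts.sup : ℤ)
  else ((l.parts.filter fun p => l.parts.count 1 < p).card : ℤ) - l.parts.count 1

/-- `crankM m n` is the crank counting function `M(m, n)`: the number of partitions
of `n` with crank `m`, with the standard convention at `n = 1`
(`M(0,1) = -1`, `M(±1,1) = 1`, `M(m,1) = 0` otherwise). -/
noncomputable def crankM (m : ℤ) (n : ℕ) : ℤ :=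
  if n = 1 then (if m = 0 then -1 else if m.natAbs = 1 then 1 else 0)
  else (Nat.card {l : n.Partition // crank l = m} : ℤ)

/-- `alphaBip s k = Σ_{ℓ ≥ 0} (-1)^ℓ p(k - ℓ(ℓ+1)/2 - ℓ s)`. -/
noncomputable def alphaBip (s k : ℕ) : ℤ :=
  ∑' ℓ : ℕ, (-1 : ℤ) ^ ℓ *
    (partitionCountInt ((k : ℤ) - ℓ * (ℓ + 1) / 2 - ℓ * s) : ℤ)

/-- `Dbip m n = π(m,n) - π(m-1,n)`, with `π(-1,n) := 0`. -/
noncomputable def Dbip (m n : ℕ) : ℤ :=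
  (bipartitePi m n : ℤ) - if m = 0 then 0 else (bipartitePi (m - 1) n : ℤ)

/-!
Number the parts from `0`. A steadily decreasing pair `(α, β)` is recovered from its gaps
`min(αᵢ, βᵢ) - max(αᵢ₊₁, βᵢ₊₁)` and its differences `αᵢ - βᵢ`: a gap at `i` contributes copies of
the vector `(i+1, i+1)` to the bipartite number `(m, n)`, and a difference contributes copies of
`(i+1, i)` or `(i, i+1)`, according to its sign. Writing `(2i+1, 2i+1) = (i+1, i) + (i, i+1)`, one
gets an arbitrary multiset of vectors `(i+1, i)`, `(i, i+1)` and `(2i+2, 2i+2)`. The number of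
vectors `(1, 0)` is determined by the others and by `m`, so `π(m, n)` counts the triples of
partitions `(λ, μ, ν)` with `|λ| + |μ| + 2|ν| = n` and `ℓ(λ) - ℓ(μ) ≤ m - n`.

Exchanging `λ` and `μ` maps the triples with `ℓ(λ) - ℓ(μ) > s` to those counted by `π(n-s-1, n)`, so
`π(n+s, n) + π(n, n-s-1) = ∑ᵢ p(i) c(n-i)`. On the other hand, `α(s, k) + α(s+1, k-s-1) = p(k)`. The
generating functions of `π(n+s, n)` and of the convolution of `c` with `α(s, ·)` thus satisfy the
same recurrence `F s + q ^ (s+1) * F (s+1) = G`, which has only one solution in power series.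
-/

open Finsupp

namespace BipartitePartition

section FinsuppNat

variable {M : Type*} [AddCommMonoid M]

/-- The sequence `f (i + 1)` obtained from `f` by dropping its head. It turns the multiplicities of
nonnegative parts into those of the positive ones. -/
noncomputable def shift : (ℕ →₀ M) →+ (ℕ →₀ M) := comapDomain.addMonoidHom (add_left_injective 1)

@[simp] theorem shift_apply (f : ℕ →₀ M) (i : ℕ) : shift f i = f (i + 1) := rfl

theorem single_zero_add_mapDomain_shift (f : ℕ →₀ M) :
    single 0 (f 0) + mapDomain (· + 1) (shift f) = f := by
  rw [shift, mapDomain_comapDomain_nat_add_one, single_add_erase]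

/-- A finitely supported sequence amounts to its head together with its shift. -/
noncomputable def headShiftEquiv : (ℕ →₀ M) ≃ M × (ℕ →₀ M) where
  toFun f := (f 0, shift f)
  invFun x := single 0 x.1 + mapDomain (· + 1) x.2
  left_inv := single_zero_add_mapDomain_shift
  right_inv x := by
    ext i
    · simp [mapDomain_of_notMem_range]
    · simp [mapDomain_apply (add_left_injective 1)]

theorem degree_eq_head_add_degree_shift (f : ℕ →₀ M) : degree f = f 0 + degree (shift f) := by
  conv_lhs => rw [← single_zero_add_mapDomain_shift f, map_add, degree_single, degree_mapDomain]

theorem weight_eq_head_add_weight_shift {R : Type*} [Semiring R] [Module R M] (w : ℕ → M)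
    (f : ℕ →₀ R) : weight w f = f 0 • w 0 + weight (fun j => w (j + 1)) (shift f) := by
  conv_lhs => rw [← single_zero_add_mapDomain_shift f, map_add, weight_single]
  exact congrArg _ (linearCombination_mapDomain R (· + 1) (shift f))

/-- The sequence of tail sums `∑ j ≥ i, w j`. When `w j` counts the columns of height `j + 1` of a
Young diagram, these are its row lengths. -/
noncomputable def tailSum : (ℕ →₀ M) →+ (ℕ →₀ M) :=
  liftAddHom fun j => ∑ i ∈ range (j + 1), singleAddHom i

theorem tailSum_single_apply (j : ℕ) (c : M) (i : ℕ) :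
    tailSum (single j c) i = if i ≤ j then c else 0 := by
  simp [tailSum, single_apply, Finset.sum_apply']

theorem tailSum_eq_add_shift (w : ℕ →₀ M) : tailSum w = w + shift (tailSum w) := by
  induction w using induction_linear with
  | zero => simp
  | add f g hf hg => rw [map_add, map_add, add_add_add_comm, ← hf, ← hg]
  | single j c =>
    ext i
    rcases lt_trichotomy i j with h | rfl | h
    · simp [tailSum_single_apply, h.le, h.ne, Nat.succ_le_iff.2 h]
    · simp [tailSum_single_apply]
    · simp [tailSum_single_apply, h.not_ge, h.ne', (h.trans i.lt_succ_self).not_ge]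

theorem tailSum_shift (f : ℕ →₀ M) : tailSum (shift f) = shift (tailSum f) := by
  induction f using induction_linear with
  | zero => simp
  | add f g hf hg => simp only [map_add, hf, hg]
  | single j c =>
    cases j with
    | zero =>
      have hshift : shift (single 0 c) = 0 := by ext i; simp
      ext i
      simp [hshift, tailSum_single_apply]
    | succ j =>
      have hshift : shift (single (j + 1) c) = single j c := by ext i; simp [single_apply]
      ext i
      simp [hshift, tailSum_single_apply]

theorem eq_tailSum_of_eq_add_shift [IsRightCancelAdd M] {f w : ℕ →₀ M} (h : f = w + shift f) :
    f = tailSum w := by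
  have hsum : f + shift (tailSum f) = tailSum w + shift (tailSum f) := by
    rw [← tailSum_eq_add_shift, ← tailSum_shift, ← map_add, ← h]
  exact add_right_cancel hsum

/-- The splitting of a sequence into its subsequences of even and of odd index. -/
noncomputable def evenOddEquiv : (ℕ →₀ M) ≃+ (ℕ →₀ M) × (ℕ →₀ M) :=
  (Finsupp.domCongr Equiv.natSumNatEquivNat).symm.trans sumFinsuppAddEquivProdFinsupp

@[simp] theorem evenOddEquiv_fst_apply (f : ℕ →₀ M) (i : ℕ) : (evenOddEquiv f).1 i = f (2 * i) := by
  simp [evenOddEquiv]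

@[simp] theorem evenOddEquiv_snd_apply (f : ℕ →₀ M) (i : ℕ) :
    (evenOddEquiv f).2 i = f (2 * i + 1) := by
  simp [evenOddEquiv]

theorem weight_evenOddEquiv {R : Type*} [Semiring R] [Module R M] (w : ℕ → M) (f : ℕ →₀ R) :
    weight w f = weight (fun i => w (2 * i)) (evenOddEquiv f).1 +
      weight (fun i => w (2 * i + 1)) (evenOddEquiv f).2 := by
  induction f using induction_linear with
  | zero => simp
  | add f g hf hg => rw [map_add, map_add, hf, hg, Prod.fst_add, Prod.snd_add, map_add, map_add,
      add_add_add_comm]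
  | single j c =>
    obtain ⟨i, rfl | rfl⟩ := j.even_or_odd'
    · have hsplit : evenOddEquiv (single (2 * i) c) = (single i c, 0) := by
        ext k
        · simp [single_apply]
        · simp [show 2 * i ≠ 2 * k + 1 by omega]
      simp [hsplit, weight_single]
    · have hsplit : evenOddEquiv (single (2 * i + 1) c) = (0, single i c) := by
        ext k
        · simp [show 2 * i + 1 ≠ 2 * k by omega]
        · simp [single_apply]
      simp [hsplit, weight_single]

end FinsuppNat

section PartitionSize

/-- The size of the partition in which the part `j + 1` has multiplicity `f j`. Partitions are
encoded by their multiplicities throughout, so that `degree f` is the number of parts. -/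
noncomputable def partitionSize : (ℕ →₀ ℕ) →+ ℕ := weight fun j => j + 1

theorem partitionSize_eq_weight_id_add_degree (f : ℕ →₀ ℕ) :
    partitionSize f = weight id f + degree f := by
  simp [partitionSize, weight_apply, degree_apply, Finsupp.sum, mul_add, Finset.sum_add_distrib]

theorem weight_id_eq_partitionSize_shift (f : ℕ →₀ ℕ) : weight id f = partitionSize (shift f) := by
  simp [weight_eq_head_add_weight_shift id f, partitionSize]

theorem degree_tailSum (w : ℕ →₀ ℕ) : degree (tailSum w) = partitionSize w := by
  induction w using induction_linear with
  | zero => simp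
  | add f g hf hg => simp only [map_add, hf, hg]
  | single j c => simp [tailSum, partitionSize, weight_single, mul_comm]

theorem partitionSize_evenOddEquiv (f : ℕ →₀ ℕ) :
    partitionSize f = partitionSize (evenOddEquiv f).1 + weight id (evenOddEquiv f).1 +
      2 * partitionSize (evenOddEquiv f).2 := by
  rw [partitionSize, weight_evenOddEquiv]
  simp only [weight_apply, Finsupp.sum, Finset.mul_sum, smul_eq_mul, ← sum_add_distrib, id]
  congr 1 <;> exact sum_congr rfl fun i _ => by ring

end PartitionSize

section Gap

/-- The gaps `min (a i) (b i) - max (a (i + 1)) (b (i + 1))`, which measure how far the inequalities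
defining `SteadilyDecreasing` are from equality; the subtraction truncates for other pairs. -/
noncomputable def gap (a b : ℕ →₀ ℕ) : ℕ →₀ ℕ := a ⊓ b - shift (a ⊔ b)

/-- The sequence of maxima of a steadily decreasing pair with gaps `t` and differences `f - g`,
`g - f`: by the definition of `gap`, it drops by `t i + |f i - g i|` from `i` to `i + 1`. -/
noncomputable def supOfGap (t f g : ℕ →₀ ℕ) : ℕ →₀ ℕ := tailSum (t + (f - g) + (g - f))

theorem gap_comm (a b : ℕ →₀ ℕ) : gap a b = gap b a := by
  rw [gap, gap, inf_comm, sup_comm]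

theorem _root_.SteadilyDecreasing.symm {a b : ℕ → ℕ} (h : SteadilyDecreasing a b) :
    SteadilyDecreasing b a := fun i => by
  rw [max_comm, min_comm]
  exact h i

variable {a b : ℕ →₀ ℕ}

theorem _root_.SteadilyDecreasing.sup_eq_supOfGap (h : SteadilyDecreasing a b) :
    a ⊔ b = supOfGap (gap a b) a b := by
  refine eq_tailSum_of_eq_add_shift (Finsupp.ext fun i => ?_)
  have hi := h i
  simp only [gap, Finsupp.add_apply, tsub_apply, sup_apply, inf_apply, shift_apply]
  omega

theorem _root_.SteadilyDecreasing.degree_add_degree_tsub (h : SteadilyDecreasing a b) :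
    degree a + degree (b - a) =
      partitionSize (gap a b) + partitionSize (a - b) + partitionSize (b - a) := by
  have hsup : a + (b - a) = a ⊔ b := by
    ext i
    simp only [Finsupp.add_apply, tsub_apply, sup_apply]
    omega
  rw [← map_add, hsup, h.sup_eq_supOfGap, supOfGap, degree_tailSum, map_add, map_add]

/-- The multiplicity of the vector `(i + 1, i)` in the decomposition of the pair `(a, b)` into
vectors `(i + 1, i)`, `(i, i + 1)` and `(2 * i + 2, 2 * i + 2)`. A gap of even index `2 * i`
contributes through `(2 * i + 1, 2 * i + 1) = (i + 1, i) + (i, i + 1)`. -/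
noncomputable def surplus (a b : ℕ →₀ ℕ) : ℕ →₀ ℕ := (evenOddEquiv (gap a b)).1 + (a - b)

theorem _root_.SteadilyDecreasing.degree_right_eq (h : SteadilyDecreasing a b) :
    degree b = weight id (surplus a b) + partitionSize (surplus b a) +
      2 * partitionSize (evenOddEquiv (gap a b)).2 := by
  have hdeg := h.symm.degree_add_degree_tsub
  have hgap := partitionSize_evenOddEquiv (gap a b)
  have hsize := partitionSize_eq_weight_id_add_degree (a - b)
  rw [gap_comm b a] at hdeg
  simp only [surplus, gap_comm b a, map_add]
  omega

variable (a b)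

theorem degree_add_degree_surplus_swap :
    degree a + degree (surplus b a) = degree b + degree (surplus a b) := by
  have hab : a + surplus b a = b + surplus a b := by
    ext i
    simp only [surplus, gap_comm b a, Finsupp.add_apply, tsub_apply]
    omega
  rw [← map_add, hab, map_add]

theorem surplus_inf_surplus_swap : surplus a b ⊓ surplus b a = (evenOddEquiv (gap a b)).1 := by
  ext i
  simp only [surplus, gap_comm b a, Finsupp.add_apply, tsub_apply, inf_apply]
  omega

theorem surplus_tsub_surplus_swap : surplus a b - surplus b a = a - b := by
  ext i
  simp only [surplus, gap_comm b a, Finsupp.add_apply, tsub_apply]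
  omega

end Gap

section OfGap

/-- The steadily decreasing pair with gaps `t` whose two differences are the truncated differences
`f - g` and `g - f`. Only these differences of `f` and `g` matter. -/
noncomputable def ofGap (t f g : ℕ →₀ ℕ) : (ℕ →₀ ℕ) × (ℕ →₀ ℕ) :=
  (supOfGap t f g - (g - f), supOfGap t f g - (f - g))

theorem _root_.SteadilyDecreasing.ofGap_gap {a b : ℕ →₀ ℕ} (h : SteadilyDecreasing a b) :
    ofGap (gap a b) a b = (a, b) := by
  rw [ofGap, ← h.sup_eq_supOfGap]
  ext i <;> simp only [tsub_apply, sup_apply] <;> omega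

variable (t f g : ℕ →₀ ℕ)

theorem supOfGap_eq_add_shift :
    supOfGap t f g = t + (f - g) + (g - f) + shift (supOfGap t f g) :=
  tailSum_eq_add_shift _

theorem ofGap_fst : (ofGap t f g).1 = t + (f - g) + shift (supOfGap t f g) := by
  refine tsub_eq_of_eq_add ((supOfGap_eq_add_shift t f g).trans ?_)
  rw [add_right_comm]

theorem ofGap_snd : (ofGap t f g).2 = t + (g - f) + shift (supOfGap t f g) := by
  refine tsub_eq_of_eq_add ((supOfGap_eq_add_shift t f g).trans ?_)
  rw [add_right_comm t, add_right_comm]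

theorem ofGap_fst_sup_snd : (ofGap t f g).1 ⊔ (ofGap t f g).2 = supOfGap t f g := by
  refine Eq.trans ?_ (supOfGap_eq_add_shift t f g).symm
  rw [ofGap_fst, ofGap_snd]
  ext i
  simp only [sup_apply, Finsupp.add_apply, tsub_apply]
  omega

theorem ofGap_fst_inf_snd :
    (ofGap t f g).1 ⊓ (ofGap t f g).2 = t + shift ((ofGap t f g).1 ⊔ (ofGap t f g).2) := by
  rw [ofGap_fst_sup_snd, ofGap_fst, ofGap_snd]
  ext i
  simp only [inf_apply, Finsupp.add_apply, tsub_apply]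
  omega

theorem steadilyDecreasing_ofGap : SteadilyDecreasing (ofGap t f g).1 (ofGap t f g).2 := fun i => by
  have hi := DFunLike.congr_fun (ofGap_fst_inf_snd t f g) i
  simp only [inf_apply, sup_apply, Finsupp.add_apply, shift_apply] at hi
  omega

theorem gap_ofGap : gap (ofGap t f g).1 (ofGap t f g).2 = t := by
  rw [gap, ofGap_fst_inf_snd, add_tsub_cancel_right]

theorem ofGap_fst_tsub_snd : (ofGap t f g).1 - (ofGap t f g).2 = f - g := by
  rw [ofGap_fst, ofGap_snd]
  ext i
  simp only [Finsupp.add_apply, tsub_apply]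
  omega

theorem ofGap_snd_tsub_fst : (ofGap t f g).2 - (ofGap t f g).1 = g - f := by
  rw [ofGap_fst, ofGap_snd]
  ext i
  simp only [Finsupp.add_apply, tsub_apply]
  omega

end OfGap

theorem inf_add_tsub {ι : Type*} (f g : ι →₀ ℕ) : f ⊓ g + (f - g) = f := by
  ext i
  simp only [Finsupp.add_apply, inf_apply, tsub_apply]
  omega

/-- The bijective form of Carlitz's product formula: a steadily decreasing pair is determined by the
multiplicities of the vectors `(i + 1, i)`, `(i, i + 1)` and `(2 * i + 2, 2 * i + 2)` in it, which
are arbitrary. -/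
noncomputable def steadilyDecreasingEquiv :
    {p : (ℕ →₀ ℕ) × (ℕ →₀ ℕ) // SteadilyDecreasing p.1 p.2} ≃
      (ℕ →₀ ℕ) × (ℕ →₀ ℕ) × (ℕ →₀ ℕ) where
  toFun p := (surplus p.1.1 p.1.2, surplus p.1.2 p.1.1, (evenOddEquiv (gap p.1.1 p.1.2)).2)
  invFun t := ⟨ofGap (evenOddEquiv.symm (t.1 ⊓ t.2.1, t.2.2)) t.1 t.2.1,
    steadilyDecreasing_ofGap _ _ _⟩
  left_inv p := Subtype.ext <| by
    simp only [surplus_inf_surplus_swap, Prod.mk.eta, AddEquiv.symm_apply_apply]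
    rw [ofGap, supOfGap, surplus_tsub_surplus_swap, surplus_tsub_surplus_swap]
    exact p.2.ofGap_gap
  right_inv := fun (f, g, h) => by
    simp only [surplus, gap_comm (ofGap _ _ _).2, gap_ofGap, ofGap_fst_tsub_snd, ofGap_snd_tsub_fst,
      AddEquiv.apply_symm_apply, inf_add_tsub]
    rw [inf_comm, inf_add_tsub]

/-- Triples of partitions `(λ, μ, ν)`, each encoded by its multiplicities as in `partitionSize`. -/
abbrev PartitionTriple := (ℕ →₀ ℕ) × (ℕ →₀ ℕ) × (ℕ →₀ ℕ)

namespace PartitionTriple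

/-- The weight `|λ| + |μ| + 2|ν|` of a triple, which becomes the second component of the
bipartite number. -/
noncomputable def size (t : PartitionTriple) : ℕ :=
  partitionSize t.1 + (partitionSize t.2.1 + 2 * partitionSize t.2.2)

/-- The difference between the numbers of parts of `λ` and `μ`. -/
noncomputable def rank (t : PartitionTriple) : ℤ := degree t.1 - degree t.2.1

/-- The involution exchanging `λ` and `μ`. -/
def swap : PartitionTriple ≃ PartitionTriple where
  toFun t := (t.2.1, t.1, t.2.2)
  invFun t := (t.2.1, t.1, t.2.2)
  left_inv _ := rfl
  right_inv _ := rfl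

theorem size_swap (t : PartitionTriple) : (swap t).size = t.size := by
  simp only [size, swap, Equiv.coe_fn_mk]
  ring

theorem rank_swap (t : PartitionTriple) : (swap t).rank = -t.rank := by
  simp [rank, swap]

theorem neg_size_le_rank (t : PartitionTriple) : -(t.size : ℤ) ≤ t.rank := by
  have hdeg := partitionSize_eq_weight_id_add_degree t.2.1
  rw [size, rank]
  omega

end PartitionTriple

open PartitionTriple

/-- The multiplicity of the vector `(1, 0)` in a steadily decreasing pair, together with the triple
formed by all the other multiplicities. -/
noncomputable def steadilyDecreasingEquivTriple :
    {p : (ℕ →₀ ℕ) × (ℕ →₀ ℕ) // SteadilyDecreasing p.1 p.2} ≃ ℕ × PartitionTriple :=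
  steadilyDecreasingEquiv.trans ((headShiftEquiv.prodCongr (.refl _)).trans (.prodAssoc _ _ _))

section EquivTriple

variable (p : {p : (ℕ →₀ ℕ) × (ℕ →₀ ℕ) // SteadilyDecreasing p.1 p.2})

theorem size_steadilyDecreasingEquivTriple :
    (steadilyDecreasingEquivTriple p).2.size = degree p.1.2 := by
  rw [p.2.degree_right_eq, weight_id_eq_partitionSize_shift, add_assoc]
  rfl

theorem add_rank_steadilyDecreasingEquivTriple :
    ((steadilyDecreasingEquivTriple p).1 : ℤ) + (steadilyDecreasingEquivTriple p).2.rank =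
      degree p.1.1 - degree p.1.2 := by
  have hdeg := degree_add_degree_surplus_swap p.1.1 p.1.2
  rw [degree_eq_head_add_degree_shift (surplus p.1.1 p.1.2)] at hdeg
  change (surplus p.1.1 p.1.2 0 : ℤ) +
    (degree (shift (surplus p.1.1 p.1.2)) - degree (surplus p.1.2 p.1.1)) = _
  omega

end EquivTriple

/-- An inequality `r y ≤ d` is the same as an equation `x + r y = d` with a natural slack `x`. -/
def slackEquiv {α : Type*} (P : α → Prop) (r : α → ℤ) (d : ℤ) :
    {x : ℕ × α // P x.2 ∧ x.1 + r x.2 = d} ≃ {y : α // P y ∧ r y ≤ d} where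
  toFun x := ⟨x.1.2, x.2.1, by have := x.2.2; omega⟩
  invFun y := ⟨((d - r y).toNat, y), y.2.1, by have := y.2.2; simp only; omega⟩
  left_inv x := Subtype.ext <| Prod.ext (by have := x.2.2; simp only; omega) rfl
  right_inv _ := rfl

theorem _root_.SteadilyDecreasing.left_succ_le {a b : ℕ → ℕ} (h : SteadilyDecreasing a b) (i : ℕ) :
    a (i + 1) ≤ a i :=
  (le_max_left _ _).trans ((h i).trans (min_le_left _ _))

theorem bipartitePi_eq_card_pairs (m n : ℕ) : bipartitePi m n =
    Nat.card {p : {p : (ℕ →₀ ℕ) × (ℕ →₀ ℕ) // SteadilyDecreasing p.1 p.2} //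
      degree p.1.1 = m ∧ degree p.1.2 = n} :=
  Nat.card_congr
    { toFun p := ⟨⟨p.1, p.2.2.2.1⟩, p.2.2.2.2⟩
      invFun p := ⟨p.1.1, p.1.2.left_succ_le, p.1.2.symm.left_succ_le, p.1.2, p.2⟩
      left_inv _ := rfl
      right_inv _ := rfl }

theorem bipartitePi_comm (m n : ℕ) : bipartitePi m n = bipartitePi n m :=
  Nat.card_congr ((Equiv.prodComm _ _).subtypeEquiv fun _ =>
    ⟨fun ⟨ha, hb, h, hm, hn⟩ => ⟨hb, ha, h.symm, hn, hm⟩,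
      fun ⟨hb, ha, h, hn, hm⟩ => ⟨ha, hb, h.symm, hm, hn⟩⟩)

theorem bipartitePi_eq_card_triples (m n : ℕ) : bipartitePi m n =
    Nat.card {t : PartitionTriple // t.size = n ∧ t.rank ≤ (m : ℤ) - n} := by
  rw [bipartitePi_eq_card_pairs]
  refine Nat.card_congr ((steadilyDecreasingEquivTriple.subtypeEquiv fun p => ?_).trans
    (slackEquiv (·.size = n) rank ((m : ℤ) - n)))
  rw [size_steadilyDecreasingEquivTriple, add_rank_steadilyDecreasingEquivTriple]
  omega

section FiberCount

variable {A B N : Type*} [AddMonoid N] [HasAntidiagonal N] (u : A → N) (v : B → N) (n : N)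

/-- The fiber of a sum `u + v` over `n` decomposes into products of fibers of `u` and `v`. -/
def addFiberEquiv : {p : A × B // u p.1 + v p.2 = n} ≃
    Σ ij : antidiagonal n, {a // u a = ij.1.1} × {b // v b = ij.1.2} where
  toFun p := ⟨⟨(u p.1.1, v p.1.2), mem_antidiagonal.2 p.2⟩, ⟨p.1.1, rfl⟩, ⟨p.1.2, rfl⟩⟩
  invFun x := ⟨(x.2.1, x.2.2), by rw [x.2.1.2, x.2.2.2]; exact mem_antidiagonal.1 x.1.2⟩
  left_inv _ := rfl
  right_inv := fun ⟨⟨⟨_, _⟩, _⟩, ⟨_, ha⟩, ⟨_, hb⟩⟩ => by dsimp only at ha hb; subst ha hb; rfl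

variable [∀ i, Finite {a // u a = i}] [∀ j, Finite {b // v b = j}]

theorem finite_addFiber : Finite {p : A × B // u p.1 + v p.2 = n} :=
  .of_equiv _ (addFiberEquiv u v n).symm

theorem card_addFiber : Nat.card {p : A × B // u p.1 + v p.2 = n} =
    ∑ ij ∈ antidiagonal n, Nat.card {a // u a = ij.1} * Nat.card {b // v b = ij.2} := by
  rw [Nat.card_congr (addFiberEquiv u v n), Nat.card_sigma]
  simp only [Nat.card_prod]
  exact sum_coe_sort (antidiagonal n) fun ij =>
    Nat.card {a // u a = ij.1} * Nat.card {b // v b = ij.2}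

end FiberCount

section MultisetEncoding

variable {α β : Type*} {c : α → β}

/-- Multisets of elements of the range of an injection `c`, encoded by multiplicities. -/
noncomputable def multisetRangeEquiv [DecidableEq α] (hc : c.Injective) :
    (α →₀ ℕ) ≃ {s : Multiset β // ∀ b ∈ s, b ∈ Set.range c} :=
  .ofBijective (fun f => ⟨(toMultiset f).map c, by simp⟩)
    ⟨fun _ _ hfg => orderIsoMultiset.injective
      (Multiset.map_injective hc (congrArg Subtype.val hfg)),
      fun ⟨s, hs⟩ => by
        have : CanLift β α c (· ∈ Set.range c) := ⟨fun _ => id⟩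
        lift s to Multiset α using hs
        exact ⟨Multiset.toFinsupp s, by simp⟩⟩

theorem sum_map_toMultiset {M : Type*} [AddCommMonoid M] (c : α → M) (f : α →₀ ℕ) :
    ((toMultiset f).map c).sum = weight c f := by
  induction f using induction_linear with
  | zero => simp
  | add f g hf hg => simp only [map_add, Multiset.map_add, Multiset.sum_add, hf, hg]
  | single a n =>
    rw [toMultiset_single, Multiset.map_nsmul, Multiset.sum_nsmul, Multiset.map_singleton,
      Multiset.sum_singleton, weight_single]

end MultisetEncoding

theorem two_mul_partitionSize (f : ℕ →₀ ℕ) :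
    2 * partitionSize f = weight (fun j => 2 * (j + 1)) f := by
  simp only [partitionSize, weight_apply, Finsupp.sum, Finset.mul_sum, smul_eq_mul,
    mul_left_comm]

/-- Multisets of positive parts, encoded by letting `f j` be the multiplicity of `j + 1`. -/
noncomputable def partsEquiv : (ℕ →₀ ℕ) ≃ {s : Multiset ℕ // ∀ i ∈ s, 0 < i} :=
  (multisetRangeEquiv (add_left_injective 1)).trans
    (Equiv.subtypeEquivRight fun s => by simp [Nat.pos_iff_ne_zero])

/-- Multisets of positive even parts, encoded by letting `f j` be the multiplicity of
`2 * (j + 1)`. -/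
noncomputable def evenPartsEquiv : (ℕ →₀ ℕ) ≃ {s : Multiset ℕ // ∀ i ∈ s, 0 < i ∧ Even i} :=
  (multisetRangeEquiv (c := fun j => 2 * (j + 1)) fun i j h => by simpa using h).trans
    (Equiv.subtypeEquivRight fun s => forall₂_congr fun i _ =>
      ⟨by rintro ⟨j, rfl⟩; simp, fun ⟨_, j, _⟩ => ⟨j - 1, by dsimp only; omega⟩⟩)

theorem sum_partsEquiv (f : ℕ →₀ ℕ) : (partsEquiv f).1.sum = partitionSize f :=
  sum_map_toMultiset _ f

theorem sum_evenPartsEquiv (f : ℕ →₀ ℕ) : (evenPartsEquiv f).1.sum = 2 * partitionSize f :=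
  (sum_map_toMultiset _ f).trans (two_mul_partitionSize f).symm

/-- Partitions of `k`, encoded by multiplicities as in `partitionSize`. -/
noncomputable def partitionEquiv (k : ℕ) : {f : ℕ →₀ ℕ // partitionSize f = k} ≃ k.Partition :=
  (partsEquiv.subtypeEquiv (q := (·.1.sum = k)) fun f => by rw [sum_partsEquiv]).trans
    { toFun s := ⟨s.1, s.1.2 _, s.2⟩
      invFun s := ⟨⟨s.parts, fun _ => s.parts_pos⟩, s.parts_sum⟩
      left_inv _ := rfl
      right_inv _ := rfl }

instance (k : ℕ) : Finite {f : ℕ →₀ ℕ // partitionSize f = k} := .of_equiv _ (partitionEquiv k).symm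

instance (k : ℕ) : Finite {f : ℕ →₀ ℕ // 2 * partitionSize f = k} :=
  .of_injective (β := {f : ℕ →₀ ℕ // partitionSize f = k / 2})
    (fun f => ⟨f, by have := f.2; omega⟩) fun _ _ h => Subtype.ext (congrArg Subtype.val h :)

theorem partitionCount_eq_card (k : ℕ) :
    partitionCount k = Nat.card {f : ℕ →₀ ℕ // partitionSize f = k} :=
  (Nat.card_congr (partitionEquiv k)).symm

theorem cubicPartition_eq_card (n : ℕ) : cubicPartition n =
    Nat.card {p : (ℕ →₀ ℕ) × (ℕ →₀ ℕ) // partitionSize p.1 + 2 * partitionSize p.2 = n} :=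
  Nat.card_congr <| Equiv.symm <|
    ((partsEquiv.prodCongr evenPartsEquiv).subtypeEquiv (q := fun s => s.1.1.sum + s.2.1.sum = n)
      fun p => by
        rw [Equiv.prodCongr_apply, Prod.map, sum_partsEquiv, sum_evenPartsEquiv]).trans
    { toFun s := ⟨(s.1.1, s.1.2), s.1.1.2, s.1.2.2, s.2⟩
      invFun s := ⟨(⟨s.1.1, s.2.1⟩, ⟨s.1.2, s.2.2.1⟩), s.2.2.2⟩
      left_inv _ := rfl
      right_inv _ := rfl }

instance (n : ℕ) :
    Finite {p : (ℕ →₀ ℕ) × (ℕ →₀ ℕ) // partitionSize p.1 + 2 * partitionSize p.2 = n} :=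
  finite_addFiber partitionSize (fun f => 2 * partitionSize f) n

instance (n : ℕ) : Finite {t : PartitionTriple // t.size = n} :=
  finite_addFiber partitionSize
    (fun p : (ℕ →₀ ℕ) × (ℕ →₀ ℕ) => partitionSize p.1 + 2 * partitionSize p.2) n

theorem card_triples_size_eq (n : ℕ) : Nat.card {t : PartitionTriple // t.size = n} =
    ∑ ij ∈ antidiagonal n, partitionCount ij.1 * cubicPartition ij.2 := by
  simp only [partitionCount_eq_card, cubicPartition_eq_card]
  exact card_addFiber partitionSize
    (fun p : (ℕ →₀ ℕ) × (ℕ →₀ ℕ) => partitionSize p.1 + 2 * partitionSize p.2) n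

theorem card_triples_rank_le_add_rank_le_neg_sub_one (n : ℕ) (d : ℤ) :
    Nat.card {t : PartitionTriple // t.size = n ∧ t.rank ≤ d} +
      Nat.card {t : PartitionTriple // t.size = n ∧ t.rank ≤ -d - 1} =
    Nat.card {t : PartitionTriple // t.size = n} := by
  have hswap : Nat.card {t : PartitionTriple // t.size = n ∧ t.rank ≤ -d - 1} =
      Nat.card {t : PartitionTriple // t.size = n ∧ ¬ t.rank ≤ d} :=
    Nat.card_congr <| swap.subtypeEquiv fun t => by rw [size_swap, rank_swap]; omega
  have hfin : {t : PartitionTriple | t.size = n}.Finite :=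
    inferInstanceAs (Finite {t : PartitionTriple // t.size = n})
  rw [hswap]
  exact Set.ncard_inter_add_ncard_sdiff_eq_ncard _ {t : PartitionTriple | t.rank ≤ d} hfin

theorem bipartitePi_add_ite_bipartitePi (s n : ℕ) :
    bipartitePi (n + s) n + (if s + 1 ≤ n then bipartitePi n (n - (s + 1)) else 0) =
      ∑ ij ∈ antidiagonal n, partitionCount ij.1 * cubicPartition ij.2 := by
  rw [← card_triples_size_eq, ← card_triples_rank_le_add_rank_le_neg_sub_one n s,
    bipartitePi_eq_card_triples, Nat.cast_add, add_sub_cancel_left]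
  congr 1
  split_ifs with hs
  · rw [bipartitePi_comm, bipartitePi_eq_card_triples,
      show ((n - (s + 1) : ℕ) : ℤ) - n = -s - 1 by omega]
  · have : IsEmpty {t : PartitionTriple // t.size = n ∧ t.rank ≤ -s - 1} :=
      ⟨fun t => by have := neg_size_le_rank t.1; have := t.2; omega⟩
    rw [Nat.card_of_isEmpty]

section Alpha

/-- The `ℓ`-th term of the series defining `α(s, r)`. Allowing `r` to be a negative integer, where
`α(s, r)` vanishes, makes the recurrence for `α` uniform. -/
noncomputable def alphaTerm (s : ℕ) (r : ℤ) (ℓ : ℕ) : ℤ :=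
  (-1) ^ ℓ * (partitionCountInt (r - ℓ * (ℓ + 1) / 2 - ℓ * s) : ℤ)

theorem alphaTerm_eq_zero_of_lt (s : ℕ) {r : ℤ} {ℓ : ℕ} (h : r < ℓ) : alphaTerm s r ℓ = 0 := by
  have htri : (ℓ : ℤ) ≤ ℓ * (ℓ + 1) / 2 := by
    rw [Int.le_ediv_iff_mul_le two_pos]
    rcases ℓ.eq_zero_or_pos with rfl | hℓ
    · simp
    · gcongr
      omega
  have hmul : (0 : ℤ) ≤ ℓ * s := by positivity
  rw [alphaTerm, partitionCountInt, if_neg (by omega), Nat.cast_zero, mul_zero]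

theorem summable_alphaTerm (s : ℕ) (r : ℤ) : Summable (alphaTerm s r) :=
  summable_of_ne_finset_zero (s := range (r.toNat + 1)) fun ℓ hℓ =>
    alphaTerm_eq_zero_of_lt s (by rw [Finset.mem_range] at hℓ; omega)

theorem alphaTerm_succ (s : ℕ) (r : ℤ) (ℓ : ℕ) :
    alphaTerm s r (ℓ + 1) = -alphaTerm (s + 1) (r - (s + 1)) ℓ := by
  have htri : ((ℓ + 1 : ℕ) : ℤ) * ((ℓ + 1 : ℕ) + 1) / 2 = ℓ * (ℓ + 1) / 2 + (ℓ + 1) := by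
    rw [← Int.add_mul_ediv_right _ _ two_ne_zero]
    push_cast
    ring_nf
  have harg : r - ((ℓ + 1 : ℕ) : ℤ) * ((ℓ + 1 : ℕ) + 1) / 2 - (ℓ + 1 : ℕ) * s =
      r - (s + 1) - ℓ * (ℓ + 1) / 2 - ℓ * (s + 1 : ℕ) := by
    rw [htri]
    push_cast
    ring
  rw [alphaTerm, alphaTerm, harg, pow_succ]
  ring

theorem tsum_alphaTerm_add (s : ℕ) (r : ℤ) :
    ∑' ℓ, alphaTerm s r ℓ + ∑' ℓ, alphaTerm (s + 1) (r - (s + 1)) ℓ = partitionCountInt r := by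
  rw [(summable_alphaTerm s r).tsum_eq_zero_add]
  simp only [alphaTerm_succ, tsum_neg]
  simp [alphaTerm]

theorem tsum_alphaTerm_of_neg (s : ℕ) {r : ℤ} (hr : r < 0) : ∑' ℓ, alphaTerm s r ℓ = 0 := by
  simp only [alphaTerm_eq_zero_of_lt s (hr.trans_le (Nat.cast_nonneg _)), tsum_zero]

theorem alphaBip_add_ite_alphaBip (s k : ℕ) :
    alphaBip s k + (if s + 1 ≤ k then alphaBip (s + 1) (k - (s + 1)) else 0) =
      partitionCount k := by
  have hrec := tsum_alphaTerm_add s k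
  rw [partitionCountInt, if_pos (Nat.cast_nonneg k), Int.toNat_natCast] at hrec
  rw [← hrec]
  congr 1
  split_ifs with hs
  · rw [show (k : ℤ) - (s + 1) = (k - (s + 1) : ℕ) by omega]
    rfl
  · rw [tsum_alphaTerm_of_neg _ (by omega)]

end Alpha

section Series

open PowerSeries

theorem eq_of_forall_add_X_pow_mul_eq {R : Type*} [Semiring R] [IsRightCancelAdd R] {e : ℕ → ℕ}
    (he : ∀ s, 0 < e s) {F G : ℕ → R⟦X⟧}
    (h : ∀ s, F s + X ^ e s * F (s + 1) = G s + X ^ e s * G (s + 1)) : F = G := by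
  have hcoeff : ∀ n s, coeff n (F s) = coeff n (G s) := fun n => by
    induction n using Nat.strong_induction_on with
    | _ n ih =>
      intro s
      have hn := congrArg (coeff n) (h s)
      simp only [map_add, coeff_X_pow_mul'] at hn
      split_ifs at hn with hs
      · rw [ih (n - e s) (by have := he s; omega) (s + 1)] at hn
        exact add_right_cancel hn
      · simpa using hn
  exact funext fun s => PowerSeries.ext fun n => hcoeff n s

/-- The generating function of the partition function. -/
noncomputable def partitionSeries : ℤ⟦X⟧ := mk fun n => (partitionCount n : ℤ)

/-- The generating function of the cubic partition function. -/
noncomputable def cubicSeries : ℤ⟦X⟧ := mk fun n => (cubicPartition n : ℤ)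

/-- The generating function of `α(s, ·)`. -/
noncomputable def alphaSeries (s : ℕ) : ℤ⟦X⟧ := mk (alphaBip s)

/-- The generating function of the values `π(n + s, n)` along a diagonal. -/
noncomputable def bipartiteSeries (s : ℕ) : ℤ⟦X⟧ := mk fun n => (bipartitePi (n + s) n : ℤ)

theorem alphaSeries_add_X_pow_mul (s : ℕ) :
    alphaSeries s + X ^ (s + 1) * alphaSeries (s + 1) = partitionSeries := by
  ext k
  simpa only [alphaSeries, partitionSeries, map_add, coeff_X_pow_mul', coeff_mk] using
    alphaBip_add_ite_alphaBip s k

theorem bipartiteSeries_add_X_pow_mul (s : ℕ) :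
    bipartiteSeries s + X ^ (s + 1) * bipartiteSeries (s + 1) = partitionSeries * cubicSeries := by
  ext n
  have hrec := congrArg (Nat.cast (R := ℤ)) (bipartitePi_add_ite_bipartitePi s n)
  push_cast at hrec
  rw [map_add, coeff_X_pow_mul', coeff_mul]
  simp only [bipartiteSeries, partitionSeries, cubicSeries, coeff_mk]
  rw [← hrec]
  congr! 2 with hs
  rw [Nat.sub_add_cancel hs]

theorem bipartiteSeries_eq_cubicSeries_mul_alphaSeries (s : ℕ) :
    bipartiteSeries s = cubicSeries * alphaSeries s := by
  refine congrFun (eq_of_forall_add_X_pow_mul_eq Nat.succ_pos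
    (G := fun s => cubicSeries * alphaSeries s) fun s => ?_) s
  rw [bipartiteSeries_add_X_pow_mul, mul_left_comm, ← mul_add, alphaSeries_add_X_pow_mul, mul_comm]

theorem bipartitePi_add_left_eq_sum (n s : ℕ) : (bipartitePi (n + s) n : ℤ) =
    ∑ k ∈ range (n + 1), (cubicPartition (n - k) : ℤ) * alphaBip s k := by
  have hcoeff := congrArg (coeff n) (bipartiteSeries_eq_cubicSeries_mul_alphaSeries s)
  rw [mul_comm, coeff_mul, Nat.sum_antidiagonal_eq_sum_range_succ_mk] at hcoeff
  simpa only [bipartiteSeries, cubicSeries, alphaSeries, coeff_mk, mul_comm] using hcoeff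

end Series

end BipartitePartition

open BipartitePartition

/-- `π(m,n) = Σ_{0 ≤ k ≤ min(m,n)} c(min(m,n) - k) · α(|m-n|, k)`. -/
theorem bipartitePi_eq_sum_cubic_alpha (m n : ℕ) :
    (bipartitePi m n : ℤ) =
      ∑ k ∈ Finset.range (min m n + 1),
        (cubicPartition (min m n - k) : ℤ) * alphaBip (((m : ℤ) - n).natAbs) k := by
  wlog hnm : n ≤ m generalizing m n with hwlog
  · rw [bipartitePi_comm, min_comm, ← Int.natAbs_neg, neg_sub]
    exact hwlog n m (le_of_not_ge hnm)
  obtain ⟨s, rfl⟩ := Nat.exists_eq_add_of_le hnm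
  simpa using bipartitePi_add_left_eq_sum n s
end

section
/- For all nonnegative integers m and n with m > 2n, D(m,n) = 0; that is, π(m,n) = π(m−1,n) whenever m > 2n, where D(m,n) := π(m,n) − π(m−1,n). -/
open Finset

/-!
Adding `k` to the first part of `α` maps the steadily decreasing pairs counted by `π(m, n)`
injectively to those counted by `π(m + k, n)`. Conversely, let `(α, β)` be counted by
`π(m + k, n)` with `m ≥ 2n`. As `α_{i+1} ≤ β_i`, all parts of `α` but the first add up to at most
`n`, so the first one is at least `m + k - n ≥ n + k`. The second parts of `α` and `β` are at most
`β_1 ≤ n`, so the first part of `α` still dominates them after `k` has been removed from it.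
In the code, parts are indexed from `0`.
-/

theorem degree_le_apply_zero_add_degree {M : Type*} [AddCommMonoid M] [PartialOrder M]
    [IsOrderedAddMonoid M] {α β : ℕ →₀ M} (hαβ : ∀ i, α (i + 1) ≤ β i) :
    α.degree ≤ α 0 + β.degree := by
  obtain ⟨N, hN⟩ := (α.support ∪ β.support).exists_nat_subset_range
  obtain ⟨hα, hβ⟩ := union_subset_iff.mp hN
  have hα' : α.support ⊆ range (N + 1) := hα.trans (range_subset_range.mpr N.le_succ)
  calc α.degree = ∑ i ∈ range (N + 1), α i :=
        α.sum_of_support_subset hα' (fun _ x ↦ x) fun _ _ ↦ rfl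
    _ = α 0 + ∑ i ∈ range N, α (i + 1) := by rw [sum_range_succ', add_comm]
    _ ≤ α 0 + ∑ i ∈ range N, β i := by gcongr; exact hαβ _
    _ = α 0 + β.degree := by
        rw [← β.sum_of_support_subset hβ (fun _ x ↦ x) fun _ _ ↦ rfl]; rfl

namespace SteadilyDecreasing

section Sequences

variable {a b : ℕ → ℕ}

theorem left_succ_le_left (h : SteadilyDecreasing a b) (i : ℕ) : a (i + 1) ≤ a i :=
  (le_max_left _ _).trans ((h i).trans (min_le_left _ _))

theorem left_succ_le_right (h : SteadilyDecreasing a b) (i : ℕ) : a (i + 1) ≤ b i :=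
  (le_max_left _ _).trans ((h i).trans (min_le_right _ _))

theorem right_succ_le_right (h : SteadilyDecreasing a b) (i : ℕ) : b (i + 1) ≤ b i :=
  (le_max_right _ _).trans ((h i).trans (min_le_right _ _))

end Sequences

variable {α β : ℕ →₀ ℕ} {k : ℕ}

theorem max_apply_one_le_degree_right (h : SteadilyDecreasing α β) :
    max (α 1) (β 1) ≤ β.degree :=
  (h 0).trans ((min_le_right _ _).trans (β.le_degree 0))

theorem degree_left_le (h : SteadilyDecreasing α β) : α.degree ≤ α 0 + β.degree :=
  degree_le_apply_zero_add_degree h.left_succ_le_right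

theorem add_single_zero (h : SteadilyDecreasing α β) :
    SteadilyDecreasing (α + Finsupp.single 0 k : ℕ →₀ ℕ) β := by
  intro i
  calc max ((α + Finsupp.single 0 k : ℕ →₀ ℕ) (i + 1)) (β (i + 1))
      = max (α (i + 1)) (β (i + 1)) := by simp
    _ ≤ min (α i) (β i) := h i
    _ ≤ min ((α + Finsupp.single 0 k : ℕ →₀ ℕ) i) (β i) := by gcongr; simp

theorem of_add_single_zero (h : SteadilyDecreasing (α + Finsupp.single 0 k : ℕ →₀ ℕ) β)
    (hα : max (α 1) (β 1) ≤ α 0) : SteadilyDecreasing α β := by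
  rintro (_ | i)
  · have hβ := (h 0).trans (min_le_right _ _)
    exact le_min hα (by simpa using hβ)
  · simpa using h (i + 1)

theorem exists_eq_add_single_zero (h : SteadilyDecreasing α β)
    (hk : 2 * β.degree + k ≤ α.degree) :
    ∃ γ : ℕ →₀ ℕ, α = γ + Finsupp.single 0 k ∧ SteadilyDecreasing γ β := by
  have hα₀ : β.degree + k ≤ α 0 := by have := h.degree_left_le; lia
  obtain ⟨γ, rfl⟩ : ∃ γ, α = γ + Finsupp.single 0 k :=
    ⟨α - Finsupp.single 0 k, (tsub_add_cancel_of_le (Finsupp.single_le_iff.mpr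
      ((Nat.le_add_left _ _).trans hα₀))).symm⟩
  have hγ₀ : β.degree ≤ γ 0 := by simpa using hα₀
  have hγ₁ : max (γ 1) (β 1) ≤ β.degree := by simpa using h.max_apply_one_le_degree_right
  exact ⟨γ, rfl, h.of_add_single_zero (hγ₁.trans hγ₀)⟩

end SteadilyDecreasing

/-- The pairs of partitions of `(m, n)` with steadily decreasing parts, which `bipartitePi m n`
counts. Each of the two sequences is non-increasing because the pair is steadily decreasing, so
this is not required separately. The sum of the parts is `Finsupp.degree`. -/
def steadyPairs (m n : ℕ) : Set ((ℕ →₀ ℕ) × (ℕ →₀ ℕ)) :=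
  {p | SteadilyDecreasing p.1 p.2 ∧ p.1.degree = m ∧ p.2.degree = n}

theorem bipartitePi_eq_ncard_steadyPairs (m n : ℕ) :
    bipartitePi m n = (steadyPairs m n).ncard :=
  Nat.card_congr <| Equiv.subtypeEquivRight fun _ ↦
    ⟨fun ⟨_, _, h⟩ ↦ h, fun h ↦ ⟨h.1.left_succ_le_left, h.1.right_succ_le_right, h⟩⟩

theorem steadyPairs_add_eq_image {m n : ℕ} (h : 2 * n ≤ m) (k : ℕ) :
    steadyPairs (m + k) n =
      Prod.map (· + Finsupp.single 0 k) id '' steadyPairs m n := by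
  apply Set.Subset.antisymm
  · rintro ⟨α, β⟩ ⟨hαβ, hα, rfl⟩
    obtain ⟨γ, rfl, hγβ⟩ := hαβ.exists_eq_add_single_zero (k := k) (by lia)
    exact ⟨(γ, β), ⟨hγβ, by simpa using hα, rfl⟩, rfl⟩
  · rintro _ ⟨⟨γ, β⟩, ⟨hγβ, hγ, hβ⟩, rfl⟩
    exact ⟨hγβ.add_single_zero, by simpa using hγ, hβ⟩

theorem bipartitePi_add_eq_of_two_mul_le {m n : ℕ} (h : 2 * n ≤ m) (k : ℕ) :
    bipartitePi (m + k) n = bipartitePi m n := by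
  have shift_injective : Function.Injective
      (Prod.map (· + Finsupp.single 0 k) id : (ℕ →₀ ℕ) × (ℕ →₀ ℕ) → _) :=
    (add_left_injective _).prodMap Function.injective_id
  rw [bipartitePi_eq_ncard_steadyPairs, bipartitePi_eq_ncard_steadyPairs,
    steadyPairs_add_eq_image h, Set.ncard_image_of_injective _ shift_injective]

/-- for `m > 2n`, `D(m,n) = 0`; that is, `π(m,n) = π(m-1,n)`. -/
theorem Dbip_eq_zero_of_two_mul_lt (m n : ℕ) (h : 2 * n < m) :
    Dbip m n = 0 ∧ bipartitePi m n = bipartitePi (m - 1) n := by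
  obtain ⟨l, rfl⟩ : ∃ l, m = l + 1 := Nat.exists_eq_add_one.mpr (by lia)
  have pi_eq : bipartitePi (l + 1) n = bipartitePi l n :=
    bipartitePi_add_eq_of_two_mul_le (Nat.lt_succ_iff.mp h) 1
  simp [Dbip, pi_eq]
end
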